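/- There exist a group H and an infinite set Z with a sharply 2-transitive action of H on Z such that every element of order 2 in H acts on Z without fixed points, and H has no nontrivial abelian normal subgroup. -/

import Mathlib

/-- An action is sharply 2-transitive if any pair of distinct points is taken
to any other pair of distinct points by a unique group element. -/
def SharplyTwoTransitive (H Z : Type*) [Group H] [MulAction H Z] : Prop :=
  ∀ y z y' z' : Z, y ≠ z → y' ≠ z' →
    ∃! h : H, h • y = y' ∧ h • z = z'

/-- A group `H` acting sharply 2-transitively on an infinite set `Z` such that the
involutions of `H` act without fixed points and `H` has no nontrivial abelian normal
subgroup. -/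
structure SharplyTwoTransitiveWitness where
  H : Type*
  [grp : Group H]
  Z : Type*
  [act : MulAction H Z]
  infinite : Infinite Z
  sharply2transitive : SharplyTwoTransitive H Z
  involutions_fixed_point_free : ∀ h : H, orderOf h = 2 → ∀ z : Z, h • z ≠ z
  no_abelian_normal : ∀ N : Subgroup H, N.Normal → (∀ a b : ↥N, a * b = b * a) → N = ⊥

/-!
Let `τ` act on a countable set as a fixed point free involution, and consider the group generated
by `τ` and infinitely many further elements, infinitely many of which commute with `τ` and
infinitely many of which are free. The action of the further generators is built from finite
partial actions. These are kept *rigid*: in the universal `G`-set in which pairs of points can be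
moved as prescribed by the partial action, pairs of distinct points have trivial stabilizer and
are flipped by conjugates of `τ` only. A rigid finite partial action extends so as to define a
generator or its inverse at one more point, by a fresh value, or so that an unused generator maps
`(a, τ a)` to a given pair `(x, y)` which is not linked to it: a generator commuting with `τ` if
`y = τ x`, and a free one if no element flips `(x, y)`. When `(x, y)` is flipped, it is so by a
conjugate of `τ`, so it can be moved to a pair of the form `(x', τ x')`. Hence a generic union
of rigid finite partial actions is a sharply 2-transitive action.

All involutions of the group are then conjugate to `τ`, so they have no fixed points. A nontrivial
abelian normal subgroup would be regular and would contain `τ`, as well as the conjugate of `τ` by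
a free generator, which does not commute with `τ`.
-/

/-! ### Sharply 2-transitive actions -/

namespace SharplyTwoTransitive

variable {G Z : Type*} [Group G] [MulAction G Z]

theorem of_exists_smul_eq {a b : Z}
    (hreg : ∀ (g : G) (y z : Z), y ≠ z → g • y = y → g • z = z → g = 1)
    (hab : ∀ y z : Z, y ≠ z → ∃ g : G, g • y = a ∧ g • z = b) : SharplyTwoTransitive G Z := by
  intro y z y' z' hyz hyz'
  obtain ⟨g, hy, hz⟩ := hab y z hyz
  obtain ⟨g', hy', hz'⟩ := hab y' z' hyz'
  refine ⟨g'⁻¹ * g, ⟨?_, ?_⟩, fun c ⟨hcy, hcz⟩ => ?_⟩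
  · rw [mul_smul, hy, ← hy', inv_smul_smul]
  · rw [mul_smul, hz, ← hz', inv_smul_smul]
  · refine inv_mul_eq_one.1 (hreg (c⁻¹ * (g'⁻¹ * g)) y z hyz ?_ ?_)
    · rw [mul_smul, mul_smul, hy, ← hy', inv_smul_smul, ← hcy, inv_smul_smul]
    · rw [mul_smul, mul_smul, hz, ← hz', inv_smul_smul, ← hcz, inv_smul_smul]

theorem eq_of_smul_eq (h : SharplyTwoTransitive G Z) {y z : Z} (hyz : y ≠ z) {a b : G}
    (hy : a • y = b • y) (hz : a • z = b • z) : a = b :=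
  (h y z (b • y) (b • z) hyz ((MulAction.injective b).ne hyz)).unique ⟨hy, hz⟩ ⟨rfl, rfl⟩

theorem exists_smul_ne [Nontrivial Z] (h : SharplyTwoTransitive G Z) {a : G} (ha : a ≠ 1) :
    ∃ z : Z, a • z ≠ z := by
  by_contra! hall
  obtain ⟨y, z, hyz⟩ := exists_pair_ne Z
  exact ha (h.eq_of_smul_eq hyz (by simp [hall]) (by simp [hall]))

theorem isConj_of_orderOf_eq_two [Nontrivial Z] (h : SharplyTwoTransitive G Z) {a b : G}
    (ha : orderOf a = 2) (hb : orderOf b = 2) : IsConj a b := by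
  have moved {c : G} (hc : orderOf c = 2) : ∃ z : Z, c • z ≠ z ∧ c • c • z = z := by
    obtain ⟨z, hz⟩ := h.exists_smul_ne (a := c) (by rintro rfl; simp at hc)
    exact ⟨z, hz, by rw [smul_smul, ← pow_two, ← hc, pow_orderOf_eq_one, one_smul]⟩
  obtain ⟨y, hy, hay⟩ := moved ha
  obtain ⟨z, hz, hbz⟩ := moved hb
  obtain ⟨k, ⟨hky, hkay⟩, -⟩ := h y (a • y) z (b • z) hy.symm hz.symm
  have hkz : k⁻¹ • z = y := inv_smul_eq_iff.2 hky.symm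
  have hkbz : k⁻¹ • b • z = a • y := inv_smul_eq_iff.2 hkay.symm
  refine isConj_iff.2 ⟨k, h.eq_of_smul_eq hz.symm ?_ ?_⟩
  · rw [mul_smul, mul_smul, hkz, hkay]
  · rw [mul_smul, mul_smul, hkbz, hay, hky, hbz]

theorem smul_ne_of_orderOf_eq_two [Nontrivial Z] (h : SharplyTwoTransitive G Z) {t : G}
    (ht : orderOf t = 2) (hfree : ∀ z : Z, t • z ≠ z) {a : G} (ha : orderOf a = 2) (z : Z) :
    a • z ≠ z := by
  obtain ⟨k, rfl⟩ := isConj_iff.1 (h.isConj_of_orderOf_eq_two ht ha)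
  intro hz
  apply hfree (k⁻¹ • z)
  rw [eq_inv_smul_iff, smul_smul, smul_smul, hz]

theorem exists_mem_smul_eq_of_normal [Nontrivial Z] (h : SharplyTwoTransitive G Z)
    {N : Subgroup G} [N.Normal] (hN : N ≠ ⊥) {y z : Z} (hyz : y ≠ z) : ∃ n ∈ N, n • y = z := by
  obtain ⟨n, hn, hn1⟩ := N.bot_or_exists_ne_one.resolve_left hN
  obtain ⟨x, hx⟩ := h.exists_smul_ne hn1
  obtain ⟨k, ⟨rfl, rfl⟩, -⟩ := h x (n • x) y z hx.symm hyz
  exact ⟨k * n * k⁻¹, ‹N.Normal›.conj_mem n hn k, by simp [mul_smul]⟩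

theorem eq_one_of_mem_abelian_normal [Nontrivial Z] (h : SharplyTwoTransitive G Z)
    {N : Subgroup G} [N.Normal] (hN : N ≠ ⊥) (hcomm : ∀ a ∈ N, ∀ b ∈ N, a * b = b * a)
    {n : G} (hn : n ∈ N) {z : Z} (hz : n • z = z) : n = 1 := by
  obtain ⟨y, hy⟩ := exists_ne z
  obtain ⟨m, hm, rfl⟩ := h.exists_mem_smul_eq_of_normal hN hy.symm
  refine h.eq_of_smul_eq hy (by rw [smul_smul, hcomm n hn m hm, mul_smul, hz, one_smul]) ?_
  rw [hz, one_smul]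

theorem mem_of_abelian_normal [Nontrivial Z] (h : SharplyTwoTransitive G Z) {t : G}
    (ht : orderOf t = 2) (hfree : ∀ z : Z, t • z ≠ z) {N : Subgroup G} [N.Normal] (hN : N ≠ ⊥)
    (hcomm : ∀ a ∈ N, ∀ b ∈ N, a * b = b * a) : t ∈ N := by
  have htt : t * t = 1 := by rw [← pow_two, ← ht, pow_orderOf_eq_one]
  have htinv : t⁻¹ = t := inv_eq_of_mul_eq_one_left htt
  obtain ⟨z⟩ := (inferInstance : Nonempty Z)
  obtain ⟨m, hm, hmz⟩ := h.exists_mem_smul_eq_of_normal hN (hfree z).symm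
  have htmz : (t * m) • z = z := by rw [mul_smul, hmz, smul_smul, htt, one_smul]
  -- `(t * m) ^ 2 = (t * m * t⁻¹) * m` lies in `N`, so `t * m` is trivial or an involution.
  have hsq : (t * m) ^ 2 = 1 := by
    refine h.eq_one_of_mem_abelian_normal hN hcomm ?_ (by rw [pow_two, mul_smul, htmz, htmz])
    have := N.mul_mem (‹N.Normal›.conj_mem m hm t) hm
    rwa [htinv, mul_assoc, ← pow_two] at this
  have htm : t * m = 1 := by
    by_contra hne
    exact h.smul_ne_of_orderOf_eq_two ht hfree (orderOf_eq_prime hsq hne) z htmz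
  rw [eq_inv_of_mul_eq_one_left htm]
  exact N.inv_mem hm

theorem eq_bot_of_abelian_normal [Nontrivial Z] (h : SharplyTwoTransitive G Z) {t : G}
    (ht : orderOf t = 2) (hfree : ∀ z : Z, t • z ≠ z) {a : G} (hta : ¬ Commute t (a * t * a⁻¹))
    {N : Subgroup G} [N.Normal] (hcomm : ∀ a ∈ N, ∀ b ∈ N, a * b = b * a) : N = ⊥ := by
  by_contra hN
  have htN := h.mem_of_abelian_normal ht hfree hN hcomm
  exact hta (hcomm t htN _ (‹N.Normal›.conj_mem t htN a))

end SharplyTwoTransitive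

/-! ### Universal `G`-sets -/

theorem exists_mulActionHom_update {κ G Y : Type*} [Group G] [MulAction G Y] {y₀ y₁ : κ → Y}
    (h : ∀ (a b : G) k l, a • y₀ k = b • y₀ l → a • y₁ k = b • y₁ l) :
    ∃ ψ : Y →[G] Y, (∀ k, ψ (y₀ k) = y₁ k) ∧
      ∀ y, (∀ k, y ∉ MulAction.orbit G (y₀ k)) → ψ y = y := by
  have graph (y : Y) : ∃ z, (∀ (a : G) k, a • y₀ k = y → z = a • y₁ k) ∧
      ((∀ k, y ∉ MulAction.orbit G (y₀ k)) → z = y) := by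
    by_cases hy : ∃ k, y ∈ MulAction.orbit G (y₀ k)
    · obtain ⟨k, b, hb⟩ := hy
      exact ⟨b • y₁ k, fun a l hal => h b a k l (hb.trans hal.symm),
        fun hy => absurd ⟨b, hb⟩ (hy k)⟩
    · push Not at hy
      exact ⟨y, fun a k hak => absurd ⟨a, hak⟩ (hy k), fun _ => rfl⟩
  choose ψ ψ_smul ψ_id using graph
  refine ⟨⟨ψ, fun a y => ?_⟩, fun k => ?_, ψ_id⟩
  · by_cases hy : ∃ k, y ∈ MulAction.orbit G (y₀ k)
    · obtain ⟨k, b, rfl⟩ := hy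
      rw [ψ_smul _ (a * b) k (mul_smul a b _), ψ_smul _ b k rfl, mul_smul, id]
    · push Not at hy
      rw [ψ_id y hy, ψ_id (a • y) fun k hk => hy k ?_, id]
      rwa [← MulAction.orbit_eq_iff, MulAction.orbit_smul, MulAction.orbit_eq_iff] at hk
  · exact (ψ_smul _ 1 k (one_smul G _)).trans (one_smul G _)

/-- The relation on `G × P` identifying `(a * c, p)` with `(a, q)` for each edge `S c p q`; its
quotient is `InducedAction S`. -/
inductive InducedAction.Rel {G P : Type*} [Group G] (S : G → P → P → Prop) :
    G × P → G × P → Prop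
  | edge {c : G} {p q : P} (h : S c p q) (a : G) : Rel S (a * c, p) (a, q)

/-- The universal `G`-set generated by points `of S p`, for `p : P`, subject to the relations
`of S q = c • of S p` for each edge `S c p q` of a `G`-labelled graph `S`. The pair `(a, p)`
stands for `a • of S p`. -/
def InducedAction {G P : Type*} [Group G] (S : G → P → P → Prop) : Type _ :=
  Quot (InducedAction.Rel S)

namespace InducedAction

variable {G P Y : Type*} [Group G] [MulAction G Y] {S : G → P → P → Prop}

instance : MulAction G (InducedAction S) where
  smul a := Quot.map (fun x => (a * x.1, x.2)) (by
    rintro _ _ ⟨h, b⟩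
    rw [← mul_assoc]
    exact .edge h (a * b))
  one_smul := by
    rintro ⟨a, p⟩
    exact congrArg (Quot.mk _) (Prod.ext (one_mul a) rfl)
  mul_smul := by
    rintro a b ⟨c, p⟩
    exact congrArg (Quot.mk _) (Prod.ext (mul_assoc a b c) rfl)

variable (S) in
/-- The generator of `InducedAction S` indexed by `p`. -/
def of (p : P) : InducedAction S := Quot.mk _ (1, p)

theorem smul_of (a : G) (p : P) : a • of S p = Quot.mk _ (a, p) :=
  congrArg (Quot.mk _) (Prod.ext (mul_one a) rfl)

theorem of_eq_smul_of {c : G} {p q : P} (h : S c p q) : of S q = c • of S p := by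
  have hq : (Quot.mk _ (1 * c, p) : InducedAction S) = of S q := Quot.sound (.edge h 1)
  rw [smul_of, ← hq, one_mul]

theorem exists_hom {f : P → Y} (hf : ∀ c p q, S c p q → f q = c • f p) :
    ∃ Φ : InducedAction S →[G] Y, ∀ p, Φ (of S p) = f p := by
  refine ⟨⟨Quot.lift (fun x => x.1 • f x.2) ?_, ?_⟩, fun p => one_smul G (f p)⟩
  · rintro _ _ ⟨h, a⟩
    simp [hf _ _ _ h, mul_smul]
  · rintro a ⟨b, p⟩
    exact mul_smul a b (f p)

theorem apply_eq_of_smul_of_eq {α : Type*} {F : G → P → α}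
    (hF : ∀ a c p q, S c p q → F (a * c) p = F a q) {a b : G} {p q : P}
    (h : a • of S p = b • of S q) : F a p = F b q := by
  rw [smul_of, smul_of] at h
  refine congrArg (Quot.lift (fun x : G × P => F x.1 x.2) ?_) h
  rintro _ _ ⟨h, a⟩
  exact hF a _ _ _ h

theorem smul_of_eq_smul_of_mono {T : G → P → P → Prop} (hST : ∀ c p q, S c p q → T c p q)
    {a b : G} {p q : P} (h : a • of S p = b • of S q) : a • of T p = b • of T q := by
  obtain ⟨Φ, hΦ⟩ := exists_hom (S := S) (f := of T) fun c p q h => of_eq_smul_of (hST c p q h)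
  simpa [hΦ] using congrArg Φ h

theorem exists_smul_of_eq_smul_of {κ : Type*} [Nonempty κ] {T : κ → G → P → P → Prop}
    (hT : Directed (· ≤ ·) T) (hST : ∀ c p q, S c p q → ∃ k, T k c p q) {a b : G} {p q : P}
    (h : a • of S p = b • of S q) : ∃ k, a • of (T k) p = b • of (T k) q := by
  have key (x y : G × P) (hxy : Relation.EqvGen (Rel S) x y) :
      ∃ k, x.1 • of (T k) x.2 = y.1 • of (T k) y.2 := by
    induction hxy with
    | rel x y hxy =>
      obtain ⟨hc, a⟩ := hxy
      obtain ⟨k, hk⟩ := hST _ _ _ hc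
      exact ⟨k, by rw [of_eq_smul_of hk, mul_smul]⟩
    | refl x => exact ⟨Classical.arbitrary κ, rfl⟩
    | symm x y _ ih => exact ih.imp fun k hk => hk.symm
    | trans x y z _ _ ih₁ ih₂ =>
      obtain ⟨k₁, h₁⟩ := ih₁
      obtain ⟨k₂, h₂⟩ := ih₂
      obtain ⟨k, hk₁, hk₂⟩ := hT k₁ k₂
      exact ⟨k, (smul_of_eq_smul_of_mono hk₁ h₁).trans (smul_of_eq_smul_of_mono hk₂ h₂)⟩
  rw [smul_of, smul_of] at h
  exact key (a, p) (b, q) (Quot.eqvGen_exact h)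

end InducedAction

theorem exists_mem_mem_of_mem_sUnion {α : Type*} {c : Set (Set α)} (hc : DirectedOn (· ⊆ ·) c)
    {x y : α} (hx : x ∈ ⋃₀ c) (hy : y ∈ ⋃₀ c) : ∃ s ∈ c, x ∈ s ∧ y ∈ s := by
  have ⟨s₀, hs₀, _⟩ := hx
  obtain ⟨s, hs, hxy⟩ := hc.exists_mem_subset_of_finite_of_subset_sUnion ⟨s₀, hs₀⟩
    (Set.toFinite {x, y}) (Set.insert_subset hx (Set.singleton_subset_iff.2 hy))
  exact ⟨s, hs, hxy (by simp), hxy (by simp)⟩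

theorem exists_directedOn_forall_inter_nonempty {κ P : Type*} [Countable κ] [Preorder P]
    {s : Set P} (hs : s.Nonempty) {D : κ → Set P} (hD : ∀ k, ∀ p ∈ s, ∃ q ∈ s, p ≤ q ∧ q ∈ D k) :
    ∃ c ⊆ s, c.Nonempty ∧ DirectedOn (· ≤ ·) c ∧ ∀ k, (c ∩ D k).Nonempty := by
  have := Encodable.ofCountable κ
  let 𝒟 (k : κ) : Order.Cofinal s :=
    { carrier := {p | p.1 ∈ D k}
      isCofinal := fun p =>
        let ⟨q, hq, hpq, hqD⟩ := hD k p p.2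
        ⟨⟨q, hq⟩, hqD, hpq⟩ }
  let I := Order.idealOfCofinals ⟨hs.some, hs.some_mem⟩ 𝒟
  refine ⟨Subtype.val '' (I : Set s), by simp, I.nonempty.image _,
    directedOn_image.2 I.directed, fun k => ?_⟩
  obtain ⟨p, hpD, hpI⟩ := Order.cofinal_meets_idealOfCofinals ⟨hs.some, hs.some_mem⟩ 𝒟 k
  exact ⟨p, ⟨p, hpI, rfl⟩, hpD⟩

theorem exists_equiv_of_biUnique_of_biTotal {α β : Type*} {r : α → β → Prop}
    (hr : Relator.BiUnique r) (hr' : Relator.BiTotal r) : ∃ e : α ≃ β, ∀ x, r x (e x) := by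
  choose f hf using hr'.1
  refine ⟨Equiv.ofBijective f ⟨fun x x' h => hr.1 (hf x) (h ▸ hf x'), fun y => ?_⟩, hf⟩
  obtain ⟨x, hx⟩ := hr'.2 y
  exact ⟨x, hr.2 (hf x) hx⟩

/-! ### Rigid partial actions -/

/-- A map `f` on pairs of points, with values in a `G`-set, is `τ`-rigid if no nontrivial element
of `G` fixes the image of a pair of distinct points, and only conjugates of `τ` flip it. -/
structure IsRigid {G X Y : Type*} [Group G] [MulAction G Y] (τ : G) (f : X → X → Y) : Prop where
  eq_one : ∀ ⦃a : G⦄ ⦃u v : X⦄, u ≠ v → a • f u v = f u v → a = 1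
  isConj : ∀ ⦃a : G⦄ ⦃u v : X⦄, u ≠ v → a • f u v = f v u → IsConj τ a

namespace IsRigid

variable {G X Y Y' : Type*} [Group G] [MulAction G Y] [MulAction G Y'] {τ : G}

theorem of_comp {f : X → X → Y} (Φ : Y →[G] Y') (h : IsRigid τ fun u v => Φ (f u v)) :
    IsRigid τ f where
  eq_one a u v huv ha := h.eq_one huv (by rw [← map_smul, ha])
  isConj a u v huv ha := h.isConj huv (by rw [← map_smul, ha])

theorem of_forall_exists_smul {f f' : X → X → Y} (h : IsRigid τ f)
    (hf' : ∀ u v, u ≠ v → ∃ (c : G) (u₀ v₀ : X), u₀ ≠ v₀ ∧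
      f' u v = c • f u₀ v₀ ∧ f' v u = c • f v₀ u₀) : IsRigid τ f' where
  eq_one a u v huv ha := by
    obtain ⟨c, u₀, v₀, hne, hc, -⟩ := hf' u v huv
    have hconj : (c⁻¹ * a * c) • f u₀ v₀ = f u₀ v₀ := by
      rw [mul_smul, mul_smul, ← hc, ha, hc, inv_smul_smul]
    have := h.eq_one hne hconj
    rwa [mul_assoc, inv_mul_eq_one, right_eq_mul] at this
  isConj a u v huv ha := by
    obtain ⟨c, u₀, v₀, hne, hc, hc'⟩ := hf' u v huv
    have hconj : (c⁻¹ * a * c) • f u₀ v₀ = f v₀ u₀ := by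
      rw [mul_smul, mul_smul, ← hc, ha, hc', inv_smul_smul]
    exact (h.isConj hne hconj).trans (isConj_iff.2 ⟨c, by group⟩)

theorem eq_of_smul_eq {f : X → X → Y} (h : IsRigid τ f) {u v : X} (huv : u ≠ v) {a b : G}
    (hab : a • f u v = b • f u v) : a = b := by
  rw [← inv_smul_eq_iff, smul_smul] at hab
  exact (inv_mul_eq_one.1 (h.eq_one huv hab)).symm

end IsRigid

/-- The data to be modelled by an action of `G` on `X`: an involution `τ` which is to act as the
fixed point free involution `twist`, and elements `gen i`, of which those with `i ∈ central`
commute with `τ`. -/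
structure TwistedGenerators (ι X G : Type*) [Group G] where
  τ : G
  gen : ι → G
  central : Set ι
  twist : X → X
  τ_mul_τ : τ * τ = 1
  commute : ∀ i ∈ central, Commute (gen i) τ
  twist_twist : ∀ x, twist (twist x) = x
  twist_ne : ∀ x, twist x ≠ x

namespace TwistedGenerators

variable {ι X G Y : Type*} [Group G] [MulAction G Y] (M : TwistedGenerators ι X G)

theorem twist_injective : Function.Injective M.twist :=
  Function.Involutive.injective M.twist_twist

theorem twist_eq_iff {x y : X} : M.twist x = y ↔ x = M.twist y :=
  Function.Involutive.eq_iff M.twist_twist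

theorem τ_smul_τ_smul (y : Y) : M.τ • M.τ • y = y := by
  rw [smul_smul, M.τ_mul_τ, one_smul]

theorem gen_smul_τ_smul {i : ι} (hi : i ∈ M.central) (y : Y) :
    M.gen i • M.τ • y = M.τ • M.gen i • y := by
  rw [smul_smul, smul_smul, M.commute i hi]

/-- A set `E` of triples `(i, u, v)`, meaning that `gen i` maps `u` to `v`, is compatible with a map
`f` on pairs if `f` is equivariant on pairs of distinct points, as far as the action is known. -/
structure IsCompatible (E : Set (ι × X × X)) (f : X → X → Y) : Prop where
  twist : ∀ ⦃u v⦄, u ≠ v → f (M.twist u) (M.twist v) = M.τ • f u v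
  gen : ∀ ⦃i u v u' v'⦄, u ≠ v → (i, u, u') ∈ E → (i, v, v') ∈ E → f u' v' = M.gen i • f u v

/-- The `G`-labelled graph on pairs of points which a map on pairs respects if and only if it is
compatible with `E`. -/
inductive PairEdge (E : Set (ι × X × X)) : G → X × X → X × X → Prop
  | twist {u v : X} (h : u ≠ v) : PairEdge E M.τ (u, v) (M.twist u, M.twist v)
  | gen {i : ι} {u v w z : X} (h : u ≠ v) (hu : (i, u, w) ∈ E) (hv : (i, v, z) ∈ E) :
      PairEdge E (M.gen i) (u, v) (w, z)

/-- The universal compatible map on pairs: `a • pair E u v = pair E u' v'` for distinct `u`, `v`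
means that some word of value `a` maps `u` to `u'` and `v` to `v'` in the partial action `E`. -/
def pair (E : Set (ι × X × X)) (u v : X) : InducedAction (M.PairEdge E) :=
  .of _ (u, v)

variable {M} {E E' : Set (ι × X × X)}

variable (M E) in
theorem isCompatible_pair : M.IsCompatible E (M.pair E) where
  twist _ _ h := InducedAction.of_eq_smul_of (.twist h)
  gen _ _ _ _ _ h hu hv := InducedAction.of_eq_smul_of (.gen h hu hv)

theorem IsCompatible.exists_hom {f : X → X → Y} (hf : M.IsCompatible E f) :
    ∃ Φ : InducedAction (M.PairEdge E) →[G] Y, ∀ u v, Φ (M.pair E u v) = f u v := by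
  obtain ⟨Φ, hΦ⟩ := InducedAction.exists_hom (S := M.PairEdge E) (f := fun p => f p.1 p.2) (by
    rintro _ _ _ (h | ⟨h, hu, hv⟩)
    exacts [hf.twist h, hf.gen h hu hv])
  exact ⟨Φ, fun u v => hΦ (u, v)⟩

theorem IsCompatible.mono {f : X → X → Y} (hf : M.IsCompatible E' f) (hE : E ⊆ E') :
    M.IsCompatible E f where
  twist := hf.twist
  gen _ _ _ _ _ h hu hv := hf.gen h (hE hu) (hE hv)

theorem IsCompatible.comp {Y' : Type*} [MulAction G Y'] {f : X → X → Y}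
    (hf : M.IsCompatible E f) (Φ : Y →[G] Y') : M.IsCompatible E fun u v => Φ (f u v) where
  twist _ _ h := by rw [hf.twist h, map_smul]
  gen _ _ _ _ _ h hu hv := by rw [hf.gen h hu hv, map_smul]

theorem IsCompatible.isRigid_pair {f : X → X → Y} (hf : M.IsCompatible E f)
    (h : IsRigid M.τ f) : IsRigid M.τ (M.pair E) := by
  obtain ⟨Φ, hΦ⟩ := hf.exists_hom
  exact .of_comp Φ (by simpa only [hΦ] using h)

theorem smul_pair_eq_of_subset (hE : E ⊆ E') {a b : G} {u v u' v' : X}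
    (h : a • M.pair E u v = b • M.pair E u' v') : a • M.pair E' u v = b • M.pair E' u' v' := by
  obtain ⟨Φ, hΦ⟩ := ((M.isCompatible_pair E').mono hE).exists_hom
  simpa only [map_smul, hΦ] using congrArg Φ h

theorem smul_pair_swap_eq {a : G} {u v u' v' : X} (h : a • M.pair E u v = M.pair E u' v') :
    a • M.pair E v u = M.pair E v' u' := by
  have hswap : M.IsCompatible E fun u v => M.pair E v u :=
    { twist := fun _ _ h => (M.isCompatible_pair E).twist h.symm
      gen := fun _ _ _ _ _ h hu hv => (M.isCompatible_pair E).gen h.symm hv hu }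
  obtain ⟨Φ, hΦ⟩ := hswap.exists_hom
  simpa only [map_smul, hΦ] using congrArg Φ h

variable (M E) in
/-- No triple in `E` involves the points `q` and `twist q`. -/
def IsFresh (q : X) : Prop :=
  ∀ ⦃i u v⦄, (i, u, v) ∈ E → (u ≠ q ∧ u ≠ M.twist q) ∧ v ≠ q ∧ v ≠ M.twist q

theorem IsFresh.twist {q : X} (hq : M.IsFresh E q) : M.IsFresh E (M.twist q) := by
  intro i u v h
  rw [M.twist_twist]
  exact ⟨(hq h).1.symm, (hq h).2.symm⟩

theorem eq_or_eq_twist_of_smul_pair_eq {a b : G} {u v x y : X}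
    (huv : M.IsFresh E u ∨ M.IsFresh E v) (h : a • M.pair E u v = b • M.pair E x y) :
    b = a ∧ x = u ∧ y = v ∨ b = a * M.τ ∧ x = M.twist u ∧ y = M.twist v := by
  let F (c : G) (p : X × X) : Prop :=
    c = a ∧ p.1 = u ∧ p.2 = v ∨ c = a * M.τ ∧ p.1 = M.twist u ∧ p.2 = M.twist v
  suffices F a (u, v) = F b (x, y) by exact this.mp (Or.inl ⟨rfl, rfl, rfl⟩)
  refine InducedAction.apply_eq_of_smul_of_eq ?_ h
  rintro c _ _ _ (@⟨w, z, -⟩ | @⟨i, w, z, w', z', -, hw, hz⟩) <;> simp only [F, eq_iff_iff]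
  · have h₁ : c * M.τ = a ↔ c = a * M.τ := by
      rw [← mul_left_inj M.τ, mul_assoc, M.τ_mul_τ, mul_one]
    rw [h₁, mul_left_inj, M.twist_eq_iff, M.twist_eq_iff, M.twist_injective.eq_iff,
      M.twist_injective.eq_iff, or_comm]
  · have h₁ : M.IsFresh E u → (w ≠ u ∧ w ≠ M.twist u) ∧ w' ≠ u ∧ w' ≠ M.twist u := fun h => h hw
    have h₂ : M.IsFresh E v → (z ≠ v ∧ z ≠ M.twist v) ∧ z' ≠ v ∧ z' ≠ M.twist v := fun h => h hz
    tauto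

variable (M E) in
/-- `E` is the graph of a partial action of the generators on `X` which respects `twist` and
whose universal map on pairs is rigid. -/
structure IsRigidPartialAction : Prop where
  biUnique : ∀ i, Relator.BiUnique fun u v => (i, u, v) ∈ E
  twist_mem : ∀ ⦃i u v⦄, i ∈ M.central → (i, u, v) ∈ E → (i, M.twist u, M.twist v) ∈ E
  isRigid : IsRigid M.τ (M.pair E)

variable (M) in
theorem isRigidPartialAction_empty : M.IsRigidPartialAction ∅ := by
  have fresh (u : X) : M.IsFresh ∅ u := fun i u v h => h.elim
  refine ⟨by simp [Relator.BiUnique, Relator.LeftUnique, Relator.RightUnique], by simp, ⟨?_, ?_⟩⟩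
  · intro a u v _ ha
    rw [← one_smul G (M.pair ∅ u v), smul_smul] at ha
    obtain ⟨h, -⟩ | ⟨-, h, -⟩ := eq_or_eq_twist_of_smul_pair_eq (.inl (fresh u)) ha
    · rw [← mul_one a, ← h]
    · exact absurd h.symm (M.twist_ne u)
  · intro a u v huv ha
    rw [← one_smul G (M.pair ∅ v u)] at ha
    obtain ⟨-, h, -⟩ | ⟨h, -⟩ := eq_or_eq_twist_of_smul_pair_eq (.inl (fresh u)) ha
    · exact absurd h.symm huv
    · rw [eq_inv_of_mul_eq_one_left h.symm, inv_eq_of_mul_eq_one_left M.τ_mul_τ]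

theorem exists_smul_pair_eq_of_sUnion {𝓔 : Set (Set (ι × X × X))} (hne : 𝓔.Nonempty)
    (hdir : DirectedOn (· ⊆ ·) 𝓔) {a b : G} {u v u' v' : X}
    (h : a • M.pair (⋃₀ 𝓔) u v = b • M.pair (⋃₀ 𝓔) u' v') :
    ∃ E ∈ 𝓔, a • M.pair E u v = b • M.pair E u' v' := by
  have : Nonempty 𝓔 := hne.to_subtype
  suffices ∃ E : 𝓔, a • M.pair E.1 u v = b • M.pair E.1 u' v' from
    let ⟨E, h⟩ := this
    ⟨E, E.2, h⟩
  refine InducedAction.exists_smul_of_eq_smul_of (fun E E' => ?_) ?_ h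
  · obtain ⟨D, hD, hED, hE'D⟩ := hdir E E.2 E' E'.2
    refine ⟨⟨D, hD⟩, ?_, ?_⟩ <;> rintro _ _ _ (h | ⟨h, hu, hv⟩)
    exacts [.twist h, .gen h (hED hu) (hED hv), .twist h, .gen h (hE'D hu) (hE'D hv)]
  · rintro _ _ _ (h | ⟨h, hu, hv⟩)
    · exact ⟨Classical.arbitrary _, .twist h⟩
    · obtain ⟨E, hE, hu, hv⟩ := exists_mem_mem_of_mem_sUnion hdir hu hv
      exact ⟨⟨E, hE⟩, .gen h hu hv⟩

theorem isRigidPartialAction_sUnion {𝓔 : Set (Set (ι × X × X))} (hne : 𝓔.Nonempty)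
    (hdir : DirectedOn (· ⊆ ·) 𝓔) (h𝓔 : ∀ E ∈ 𝓔, M.IsRigidPartialAction E) :
    M.IsRigidPartialAction (⋃₀ 𝓔) := by
  refine ⟨fun i => ⟨fun u u' v hu hu' => ?_, fun u v v' hv hv' => ?_⟩, ?_, ?_, ?_⟩
  · obtain ⟨E, hE, hu, hu'⟩ := exists_mem_mem_of_mem_sUnion hdir hu hu'
    exact ((h𝓔 E hE).biUnique i).1 hu hu'
  · obtain ⟨E, hE, hv, hv'⟩ := exists_mem_mem_of_mem_sUnion hdir hv hv'
    exact ((h𝓔 E hE).biUnique i).2 hv hv'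
  · rintro i u v hi ⟨E, hE, h⟩
    exact ⟨E, hE, (h𝓔 E hE).twist_mem hi h⟩
  · intro a u v huv h
    rw [← one_smul G (M.pair _ u v), smul_smul] at h
    obtain ⟨E, hE, h⟩ := exists_smul_pair_eq_of_sUnion hne hdir h
    exact (h𝓔 E hE).isRigid.eq_one huv (by rwa [mul_one, one_smul] at h)
  · intro a u v huv h
    rw [← one_smul G (M.pair _ v u)] at h
    obtain ⟨E, hE, h⟩ := exists_smul_pair_eq_of_sUnion hne hdir h
    exact (h𝓔 E hE).isRigid.isConj huv (by rwa [one_smul] at h)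

variable (M) in
/-- The generators `(gen i)⁻¹`, for which partial actions are those of `M` read backwards. -/
def inv : TwistedGenerators ι X G :=
  { M with
    gen := fun i => (M.gen i)⁻¹
    commute := fun i hi => (M.commute i hi).inv_left }

variable (M) in
theorem inv_inv : M.inv.inv = M := by
  simp only [inv, _root_.inv_inv]

theorem IsRigidPartialAction.inv (hE : M.IsRigidPartialAction E) :
    M.inv.IsRigidPartialAction (Prod.map id Prod.swap ⁻¹' E) where
  biUnique i :=
    ⟨fun _ _ _ h h' => (hE.biUnique i).2 h h', fun _ _ _ h h' => (hE.biUnique i).1 h h'⟩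
  twist_mem _ _ _ hi h := hE.twist_mem hi h
  isRigid := by
    refine IsCompatible.isRigid_pair ⟨(M.isCompatible_pair E).twist, ?_⟩ hE.isRigid
    intro i u v u' v' huv hu hv
    have huv' : u' ≠ v' := by
      rintro rfl
      exact huv ((hE.biUnique i).2 hu hv)
    exact eq_inv_smul_iff.2 ((M.isCompatible_pair E).gen huv' hu hv).symm

/-! ### Extensions of rigid partial actions -/

/-- Enlarging `E` to `E'` puts a new edge labelled `gen i` from the pair `(u, v)` to `(u', v')`. -/
def IsNewPairEdge (E E' : Set (ι × X × X)) (i : ι) (u v u' v' : X) : Prop :=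
  u ≠ v ∧ (i, u, u') ∈ E' ∧ (i, v, v') ∈ E' ∧ ¬ ((i, u, u') ∈ E ∧ (i, v, v') ∈ E)

theorem IsNewPairEdge.swap {i : ι} {u v u' v' : X} (h : IsNewPairEdge E E' i u v u' v') :
    IsNewPairEdge E E' i v u v' u' :=
  ⟨h.1.symm, h.2.2.1, h.2.1, fun h' => h.2.2.2 h'.symm⟩

-- The universal `E'`-compatible map is rigid since `pair E` followed by the equivariant map that
-- moves the target of each new edge next to its source is `E'`-compatible and rigid.
theorem isRigid_pair_of_isNewPairEdge (hE : IsRigid M.τ (M.pair E))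
    (hdisj : ∀ i j u v u' v' x y x' y', IsNewPairEdge E E' i u v u' v' →
      IsNewPairEdge E E' j x y x' y' → M.pair E u v ∉ MulAction.orbit G (M.pair E x' y'))
    (hinj : ∀ i j u v u' v' x y x' y', IsNewPairEdge E E' i u v u' v' →
      IsNewPairEdge E E' j x y x' y' → ∀ a b : G, a • M.pair E u' v' = b • M.pair E x' y' →
        a • M.gen i • M.pair E u v = b • M.gen j • M.pair E x y) :
    IsRigid M.τ (M.pair E') := by
  let NewEdge := {e : ι × (X × X) × X × X //
    IsNewPairEdge E E' e.1 e.2.1.1 e.2.1.2 e.2.2.1 e.2.2.2}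
  obtain ⟨ψ, hψ, hψ_id⟩ := exists_mulActionHom_update (G := G)
    (y₀ := fun e : NewEdge => M.pair E e.1.2.2.1 e.1.2.2.2)
    (y₁ := fun e : NewEdge => M.gen e.1.1 • M.pair E e.1.2.1.1 e.1.2.1.2)
    fun a b e e' => hinj _ _ _ _ _ _ _ _ _ _ e.2 e'.2 a b
  have target {i u v u' v'} (h : IsNewPairEdge E E' i u v u' v') :
      ψ (M.pair E u' v') = M.gen i • M.pair E u v :=
    hψ ⟨(i, (u, v), u', v'), h⟩
  have fixed {u v} (h : ∀ j x y x' y', IsNewPairEdge E E' j x y x' y' →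
      M.pair E u v ∉ MulAction.orbit G (M.pair E x' y')) : ψ (M.pair E u v) = M.pair E u v :=
    hψ_id _ fun e => h _ _ _ _ _ e.2
  have hcompat : M.IsCompatible E' fun u v => ψ (M.pair E u v) :=
    { twist := ((M.isCompatible_pair E).comp ψ).twist
      gen := by
        intro i u v u' v' huv hu hv
        by_cases hold : (i, u, u') ∈ E ∧ (i, v, v') ∈ E
        · exact ((M.isCompatible_pair E).comp ψ).gen huv hold.1 hold.2
        · have hnew : IsNewPairEdge E E' i u v u' v' := ⟨huv, hu, hv, hold⟩
          rw [target hnew, fixed fun j x y x' y' => hdisj i j u v u' v' x y x' y' hnew] }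
  refine hcompat.isRigid_pair (hE.of_forall_exists_smul fun u v huv => ?_)
  by_cases h : ∃ j x y x' y', IsNewPairEdge E E' j x y x' y' ∧
      M.pair E u v ∈ MulAction.orbit G (M.pair E x' y')
  · obtain ⟨j, x, y, x', y', hnew, c, hc⟩ := h
    refine ⟨c * M.gen j, x, y, hnew.1, ?_, ?_⟩
    · rw [← hc, map_smul, target hnew, mul_smul]
    · rw [← smul_pair_swap_eq hc, map_smul, target hnew.swap, mul_smul]
  · push Not at h
    refine ⟨1, u, v, huv, ?_, ?_⟩
    · rw [fixed h, one_smul]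
    · rw [fixed, one_smul]
      rintro j x y x' y' hnew ⟨c, hc⟩
      exact h j y x y' x' hnew.swap ⟨c, smul_pair_swap_eq hc⟩

variable (M E) in
theorem pair_twist_self (a : X) : M.pair E (M.twist a) a = M.τ • M.pair E a (M.twist a) := by
  rw [← (M.isCompatible_pair E).twist (M.twist_ne a).symm, M.twist_twist]

theorem biUnique_insert_pair {i j : ι} (hE : Relator.BiUnique fun u v => (j, u, v) ∈ E)
    (hi : ∀ u v, (i, u, v) ∉ E) {x y x' y' : X} (hxy : x ≠ y) (hxy' : x' ≠ y') :
    Relator.BiUnique fun u v => (j, u, v) ∈ insert (i, x, x') (insert (i, y, y') E) := by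
  simp only [Set.mem_insert_iff, Prod.mk.injEq]
  constructor
  · intro u v w hu hv
    have := @hE.1 u v w
    grind
  · intro u v w hv hw
    have := @hE.2 u v w
    grind

theorem isNewPairEdge_insert_pair {i j : ι} (hi : ∀ u v, (i, u, v) ∉ E) {x y x' y' u v u' v' : X}
    (h : IsNewPairEdge E (insert (i, x, x') (insert (i, y, y') E)) j u v u' v') :
    j = i ∧ (u = x ∧ v = y ∧ u' = x' ∧ v' = y' ∨ u = y ∧ v = x ∧ u' = y' ∧ v' = x') := by
  obtain ⟨huv, hu, hv, hnew⟩ := h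
  simp only [Set.mem_insert_iff, Prod.mk.injEq] at hu hv
  grind

theorem IsRigidPartialAction.insert_pair (hE : M.IsRigidPartialAction E) {i : ι}
    (hi : ∀ u v, (i, u, v) ∉ E) {x y a : X} (hxy : x ≠ y)
    (ha : M.pair E a (M.twist a) ∉ MulAction.orbit G (M.pair E x y))
    (hyx : i ∈ M.central ∧ y = M.twist x ∨
      i ∉ M.central ∧ M.pair E y x ∉ MulAction.orbit G (M.pair E x y)) :
    M.IsRigidPartialAction (insert (i, a, x) (insert (i, M.twist a, y) E)) where
  biUnique j := biUnique_insert_pair (hE.biUnique j) hi (M.twist_ne a).symm hxy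
  twist_mem j u v hj hu := by
    have := hE.twist_mem (u := u) (v := v) hj
    have := M.twist_twist
    simp only [Set.mem_insert_iff, Prod.mk.injEq] at hu ⊢
    grind
  isRigid := by
    have htwist := M.pair_twist_self E
    have swap {u v u' v' : X} (h : M.pair E u v ∈ MulAction.orbit G (M.pair E u' v')) :
      M.pair E v u ∈ MulAction.orbit G (M.pair E v' u') := h.imp fun _ => smul_pair_swap_eq
    have ha' : M.pair E (M.twist a) a ∉ MulAction.orbit G (M.pair E x y) := by
      rwa [htwist, ← MulAction.orbit_eq_iff, MulAction.orbit_smul, MulAction.orbit_eq_iff]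
    have hcross (c d : G) (h : c • M.pair E x y = d • M.pair E y x) :
        c • M.gen i • M.pair E a (M.twist a) = d • M.gen i • M.pair E (M.twist a) a := by
      obtain ⟨hi, rfl⟩ | ⟨-, hyx⟩ := hyx
      · rw [htwist, smul_smul d] at h
        rw [htwist, M.gen_smul_τ_smul hi, smul_smul d, hE.isRigid.eq_of_smul_eq hxy h]
      · exact absurd (MulAction.mem_orbit_iff.2 ⟨d⁻¹ * c, by rw [mul_smul, h, inv_smul_smul]⟩) hyx
    refine isRigid_pair_of_isNewPairEdge hE.isRigid ?_ ?_
    · intro j k u v u' v' z w z' w' h h'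
      obtain ⟨-, ⟨rfl, rfl, -, -⟩ | ⟨rfl, rfl, -, -⟩⟩ := isNewPairEdge_insert_pair hi h <;>
      obtain ⟨-, ⟨-, -, rfl, rfl⟩ | ⟨-, -, rfl, rfl⟩⟩ := isNewPairEdge_insert_pair hi h'
      exacts [ha, mt swap ha', ha', mt swap ha]
    · intro j k u v u' v' z w z' w' h h' c d hcd
      obtain ⟨rfl, ⟨rfl, rfl, rfl, rfl⟩ | ⟨rfl, rfl, rfl, rfl⟩⟩ :=
        isNewPairEdge_insert_pair hi h <;>
      obtain ⟨rfl, ⟨rfl, rfl, rfl, rfl⟩ | ⟨rfl, rfl, rfl, rfl⟩⟩ :=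
        isNewPairEdge_insert_pair hi h'
      · rw [hE.isRigid.eq_of_smul_eq hxy hcd]
      · exact hcross c d hcd
      · exact (hcross d c hcd.symm).symm
      · rw [hE.isRigid.eq_of_smul_eq hxy.symm hcd]

variable (M E) in
/-- The extension of the partial action `E` by `gen i • p = q`, and by what follows from it if
`gen i` is to commute with `twist`. -/
def extend (i : ι) (p q : X) : Set (ι × X × X) :=
  E ∪ {e | e = (i, p, q) ∨ i ∈ M.central ∧ e = (i, M.twist p, M.twist q)}

variable {i j k : ι} {p q u v u' v' x : X}

theorem mem_extend : (j, u, v) ∈ M.extend E i p q ↔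
    (j, u, v) ∈ E ∨ j = i ∧ (u = p ∧ v = q ∨ i ∈ M.central ∧ u = M.twist p ∧ v = M.twist q) := by
  simp only [extend, Set.mem_union, Set.mem_ofPred_eq, Prod.mk.injEq]
  tauto

theorem IsRigidPartialAction.biUnique_extend (hE : M.IsRigidPartialAction E)
    (hp : ∀ v, (i, p, v) ∉ E) (hq : M.IsFresh E q) (j : ι) :
    Relator.BiUnique fun u v => (j, u, v) ∈ M.extend E i p q := by
  have hp' (hi : i ∈ M.central) (v : X) : (i, M.twist p, v) ∉ E := fun h =>
    hp (M.twist v) (M.twist_twist p ▸ hE.twist_mem hi h)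
  have := M.twist_ne p
  have := M.twist_ne q
  simp only [mem_extend]
  constructor
  · intro u v w hu hv
    have := @(hE.biUnique j).1 u v w
    have := @hq j u w
    have := @hq j v w
    grind
  · intro u v w hv hw
    have := @(hE.biUnique j).2 u v w
    grind

theorem IsRigidPartialAction.twist_mem_extend (hE : M.IsRigidPartialAction E)
    (hj : j ∈ M.central) (h : (j, u, v) ∈ M.extend E i p q) :
    (j, M.twist u, M.twist v) ∈ M.extend E i p q := by
  rw [mem_extend] at h ⊢
  obtain h | ⟨rfl, ⟨rfl, rfl⟩ | ⟨-, rfl, rfl⟩⟩ := h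
  · exact .inl (hE.twist_mem hj h)
  · exact .inr ⟨rfl, .inr ⟨hj, rfl, rfl⟩⟩
  · exact .inr ⟨rfl, .inl ⟨M.twist_twist p, M.twist_twist q⟩⟩

theorem IsFresh.source_ne_of_mem_extend (hq : M.IsFresh E q) (hqp : q ≠ p)
    (hqp' : q ≠ M.twist p) (h : (j, u, v) ∈ M.extend E i p q) : u ≠ q ∧ u ≠ M.twist q := by
  obtain h | ⟨-, ⟨rfl, -⟩ | ⟨-, rfl, -⟩⟩ := mem_extend.1 h
  · exact (hq h).1
  · exact ⟨hqp.symm, fun h => hqp' (M.twist_eq_iff.1 h.symm)⟩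
  · exact ⟨hqp'.symm, fun h => hqp (M.twist_injective h).symm⟩

theorem IsFresh.label_eq_of_mem_extend (hq : M.IsFresh E q)
    (h : (j, u, v) ∈ M.extend E i p q) (hv : v = q ∨ v = M.twist q) :
    j = i ∧ (v = q ∨ i ∈ M.central) := by
  obtain h | ⟨rfl, ⟨-, rfl⟩ | ⟨hi, -, -⟩⟩ := mem_extend.1 h
  · exact absurd hv (not_or.2 (hq h).2)
  · exact ⟨rfl, .inl rfl⟩
  · exact ⟨rfl, .inr hi⟩

theorem IsFresh.mem_central_of_mem_extend (hq : M.IsFresh E q)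
    (h : (j, u, v) ∈ M.extend E i p q) (h' : (k, x, M.twist v) ∈ M.extend E i p q)
    (hv : v = q ∨ v = M.twist q) : i ∈ M.central := by
  obtain rfl | rfl := hv
  · exact (hq.label_eq_of_mem_extend h' (.inr rfl)).2.resolve_left (M.twist_ne v)
  · exact (hq.label_eq_of_mem_extend h (.inr rfl)).2.resolve_left (M.twist_ne q)

theorem IsNewPairEdge.target_eq_of_extend (h : IsNewPairEdge E (M.extend E i p q) j u v u' v') :
    (u' = q ∨ u' = M.twist q) ∨ v' = q ∨ v' = M.twist q := by
  obtain ⟨-, hu, hv, hnew⟩ := h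
  rw [mem_extend] at hu hv
  tauto

theorem IsNewPairEdge.label_eq_of_extend (hq : M.IsFresh E q)
    (h : IsNewPairEdge E (M.extend E i p q) j u v u' v') : j = i :=
  h.target_eq_of_extend.elim (fun hu' => (hq.label_eq_of_mem_extend h.2.1 hu').1)
    fun hv' => (hq.label_eq_of_mem_extend h.2.2.1 hv').1

theorem IsRigidPartialAction.isRigid_pair_extend (hE : M.IsRigidPartialAction E)
    (hp : ∀ v, (i, p, v) ∉ E) (hq : M.IsFresh E q) (hqp : q ≠ p) (hqp' : q ≠ M.twist p) :
    IsRigid M.τ (M.pair (M.extend E i p q)) := by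
  have left_unique j := (hE.biUnique_extend hp hq j).1
  have fresh {u} (h : u = q ∨ u = M.twist q) : M.IsFresh E u := by
    obtain rfl | rfl := h
    exacts [hq, hq.twist]
  refine isRigid_pair_of_isNewPairEdge hE.isRigid ?_ ?_
  · rintro j k u v u' v' x y x' y' h h' ⟨c, hc⟩
    rw [← one_smul G (M.pair E u v)] at hc
    have hu := hq.source_ne_of_mem_extend hqp hqp' h.2.1
    have hv := hq.source_ne_of_mem_extend hqp hqp' h.2.2.1
    have htwist := M.twist_twist q
    have htarget := h'.target_eq_of_extend
    obtain ⟨-, rfl, rfl⟩ | ⟨-, rfl, rfl⟩ :=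
      eq_or_eq_twist_of_smul_pair_eq (htarget.imp fresh fresh) hc <;> grind
  · intro j k u v u' v' x y x' y' h h' a b hab
    have htarget := h.target_eq_of_extend
    obtain rfl := h.label_eq_of_extend hq
    obtain rfl := h'.label_eq_of_extend hq
    obtain ⟨rfl, rfl, rfl⟩ | ⟨rfl, rfl, rfl⟩ :=
      eq_or_eq_twist_of_smul_pair_eq (htarget.imp fresh fresh) hab
    · rw [left_unique k h.2.1 h'.2.1, left_unique k h.2.2.1 h'.2.2.1]
    · have hk : k ∈ M.central :=
        htarget.elim (hq.mem_central_of_mem_extend h.2.1 h'.2.1)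
          (hq.mem_central_of_mem_extend h.2.2.1 h'.2.2.1)
      rw [left_unique k h'.2.1 (hE.twist_mem_extend hk h.2.1),
        left_unique k h'.2.2.1 (hE.twist_mem_extend hk h.2.2.1),
        (M.isCompatible_pair E).twist h.1, M.gen_smul_τ_smul hk, mul_smul, M.τ_smul_τ_smul]

theorem IsRigidPartialAction.extend (hE : M.IsRigidPartialAction E)
    (hp : ∀ v, (i, p, v) ∉ E) (hq : M.IsFresh E q) (hqp : q ≠ p) (hqp' : q ≠ M.twist p) :
    M.IsRigidPartialAction (M.extend E i p q) where
  biUnique := hE.biUnique_extend hp hq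
  twist_mem _ _ _ := hE.twist_mem_extend
  isRigid := hE.isRigid_pair_extend hp hq hqp hqp'

theorem exists_isFresh [Infinite X] (hE : E.Finite) (p : X) :
    ∃ q, M.IsFresh E q ∧ q ≠ p ∧ q ≠ M.twist p := by
  let S : Set X := {p} ∪ (fun e => e.2.1) '' E ∪ (fun e => e.2.2) '' E
  have hS : S.Finite := ((Set.finite_singleton p).union (hE.image _)).union (hE.image _)
  obtain ⟨q, hq⟩ := (hS.union (hS.image M.twist)).exists_notMem
  rw [Set.mem_union, not_or, Set.mem_image] at hq
  have ne {s : X} (hs : s ∈ S) : s ≠ q ∧ s ≠ M.twist q :=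
    ⟨fun h => hq.1 (h ▸ hs), fun h => hq.2 ⟨s, hs, M.twist_eq_iff.2 h⟩⟩
  refine ⟨q, fun i u v h => ⟨ne ?_, ne ?_⟩, (ne ?_).1.symm, ?_⟩
  · exact .inl (.inr ⟨_, h, rfl⟩)
  · exact .inr ⟨_, h, rfl⟩
  · exact .inl (.inl rfl)
  · exact fun h => hq.2 ⟨p, .inl (.inl rfl), h.symm⟩

theorem exists_mem_forall_notMem (hE : E.Finite) {s : Set ι} (hs : s.Infinite) :
    ∃ i ∈ s, ∀ u v, (i, u, v) ∉ E := by
  obtain ⟨i, hi, hiE⟩ := hs.exists_notMem_finite (hE.image Prod.fst)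
  exact ⟨i, hi, fun u v h => hiE ⟨_, h, rfl⟩⟩

theorem finite_extend (hE : E.Finite) : (M.extend E i p q).Finite :=
  hE.union (((Set.finite_singleton (i, M.twist p, M.twist q)).insert (i, p, q)).subset
    fun _ he => he.imp_right And.right)

theorem IsRigidPartialAction.exists_mem_of_source [Infinite X] (hE : M.IsRigidPartialAction E)
    (hfin : E.Finite) (i : ι) (p : X) :
    ∃ E', E ⊆ E' ∧ E'.Finite ∧ M.IsRigidPartialAction E' ∧ ∃ q, (i, p, q) ∈ E' := by
  by_cases hp : ∃ q, (i, p, q) ∈ E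
  · exact ⟨E, subset_rfl, hfin, hE, hp⟩
  · obtain ⟨q, hq, hqp, hqp'⟩ := M.exists_isFresh hfin p
    exact ⟨M.extend E i p q, Set.subset_union_left, finite_extend hfin,
      hE.extend (not_exists.1 hp) hq hqp hqp', q, .inr (.inl rfl)⟩

theorem IsRigidPartialAction.exists_mem_of_target [Infinite X] (hE : M.IsRigidPartialAction E)
    (hfin : E.Finite) (i : ι) (q : X) :
    ∃ E', E ⊆ E' ∧ E'.Finite ∧ M.IsRigidPartialAction E' ∧ ∃ p, (i, p, q) ∈ E' := by
  have finite_rev {E : Set (ι × X × X)} (hE : E.Finite) : (Prod.map id Prod.swap ⁻¹' E).Finite :=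
    hE.preimage (Function.injective_id.prodMap Prod.swap_injective).injOn
  obtain ⟨E', hEE', hfin', hE', hq⟩ := hE.inv.exists_mem_of_source (finite_rev hfin) i q
  refine ⟨Prod.map id Prod.swap ⁻¹' E', fun e he => hEE' he, finite_rev hfin', ?_, hq⟩
  rw [← M.inv_inv]
  exact hE'.inv

variable (M E) in
/-- The partial action `E` moves the pair `(x, y)` to the base pair `(a, twist a)` or, which is not
allowed if `y = twist x`, flips it. -/
def IsLinked (a x y : X) : Prop :=
  M.pair E a (M.twist a) ∈ MulAction.orbit G (M.pair E x y) ∨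
    y ≠ M.twist x ∧ M.pair E y x ∈ MulAction.orbit G (M.pair E x y)

theorem IsLinked.mono {a x y : X} (h : M.IsLinked E a x y) (hE : E ⊆ E') :
    M.IsLinked E' a x y := by
  have mem_orbit {u v} : M.pair E u v ∈ MulAction.orbit G (M.pair E x y) →
      M.pair E' u v ∈ MulAction.orbit G (M.pair E' x y) := by
    rintro ⟨c, hc⟩
    refine ⟨c, ?_⟩
    simpa using smul_pair_eq_of_subset hE (b := 1) (hc.trans (one_smul G _).symm)
  exact h.imp mem_orbit (.imp_right mem_orbit)

theorem IsRigidPartialAction.exists_isLinked (hE : M.IsRigidPartialAction E)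
    (hfin : E.Finite) (hc : M.central.Infinite) (hc' : M.centralᶜ.Infinite) (a : X) {x y : X}
    (hxy : x ≠ y) :
    ∃ E', E ⊆ E' ∧ E'.Finite ∧ M.IsRigidPartialAction E' ∧ M.IsLinked E' a x y := by
  by_cases hlinked : M.IsLinked E a x y
  · exact ⟨E, subset_rfl, hfin, hE, hlinked⟩
  obtain ⟨ha, hyx⟩ := not_or.1 hlinked
  obtain ⟨i, hi, hi'⟩ : ∃ i, (∀ u v, (i, u, v) ∉ E) ∧ (i ∈ M.central ∧ y = M.twist x ∨
      i ∉ M.central ∧ M.pair E y x ∉ MulAction.orbit G (M.pair E x y)) := by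
    by_cases hy : y = M.twist x
    · obtain ⟨i, hi, hiE⟩ := exists_mem_forall_notMem hfin hc
      exact ⟨i, hiE, .inl ⟨hi, hy⟩⟩
    · obtain ⟨i, hi, hiE⟩ := exists_mem_forall_notMem hfin hc'
      exact ⟨i, hiE, .inr ⟨hi, fun h => hyx ⟨hy, h⟩⟩⟩
  refine ⟨insert (i, a, x) (insert (i, M.twist a, y) E),
    (Set.subset_insert _ _).trans (Set.subset_insert _ _), (hfin.insert _).insert _,
    hE.insert_pair hi hxy ha hi', .inl ⟨(M.gen i)⁻¹, inv_smul_eq_iff.2 ?_⟩⟩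
  exact (M.isCompatible_pair _).gen (M.twist_ne a).symm (.inl rfl) (.inr (.inl rfl))

/-! ### Generic actions -/

theorem exists_isRigidPartialAction_biTotal [Countable ι] [Countable X] [Infinite X]
    (hc : M.central.Infinite) (hc' : M.centralᶜ.Infinite) (a : X) :
    ∃ U, M.IsRigidPartialAction U ∧ (∀ i, Relator.BiTotal fun u v => (i, u, v) ∈ U) ∧
      ∀ x y, x ≠ y → M.IsLinked U a x y := by
  let D : (ι × X) ⊕ (ι × X) ⊕ {p : X × X // p.1 ≠ p.2} → Set (Set (ι × X × X)) :=
    Sum.elim (fun k => {E | ∃ q, (k.1, k.2, q) ∈ E}) <|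
      Sum.elim (fun k => {E | ∃ p, (k.1, p, k.2) ∈ E}) fun k => {E | M.IsLinked E a k.1.1 k.1.2}
  have hD : ∀ k, ∀ E ∈ {E | E.Finite ∧ M.IsRigidPartialAction E},
      ∃ E' ∈ {E | E.Finite ∧ M.IsRigidPartialAction E}, E ⊆ E' ∧ E' ∈ D k := by
    rintro (⟨i, p⟩ | ⟨i, q⟩ | ⟨⟨x, y⟩, hxy⟩) E ⟨hfin, hE⟩
    · obtain ⟨E', hEE', hfin', hE', h⟩ := hE.exists_mem_of_source hfin i p
      exact ⟨E', ⟨hfin', hE'⟩, hEE', h⟩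
    · obtain ⟨E', hEE', hfin', hE', h⟩ := hE.exists_mem_of_target hfin i q
      exact ⟨E', ⟨hfin', hE'⟩, hEE', h⟩
    · obtain ⟨E', hEE', hfin', hE', h⟩ := hE.exists_isLinked hfin hc hc' a hxy
      exact ⟨E', ⟨hfin', hE'⟩, hEE', h⟩
  obtain ⟨𝓔, h𝓔, hne, hdir, hmeet⟩ := exists_directedOn_forall_inter_nonempty
    (s := {E | E.Finite ∧ M.IsRigidPartialAction E})
    ⟨∅, Set.finite_empty, M.isRigidPartialAction_empty⟩ hD
  refine ⟨⋃₀ 𝓔, isRigidPartialAction_sUnion hne hdir fun E hE => (h𝓔 hE).2,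
    fun i => ⟨fun u => ?_, fun v => ?_⟩, fun x y hxy => ?_⟩
  · obtain ⟨E, hE, v, h⟩ := hmeet (.inl (i, u))
    exact ⟨v, E, hE, h⟩
  · obtain ⟨E, hE, u, h⟩ := hmeet (.inr (.inl (i, v)))
    exact ⟨u, E, hE, h⟩
  · obtain ⟨E, hE, h⟩ := hmeet (.inr (.inr ⟨(x, y), hxy⟩))
    exact h.mono (Set.subset_sUnion_of_mem hE)

section Action

variable [MulAction G X]

theorem smul_pair (hτ : ∀ x, M.τ • x = M.twist x) (hgen : ∀ i x, (i, x, M.gen i • x) ∈ E)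
    (htop : Subgroup.closure (insert M.τ (Set.range M.gen)) = ⊤) (c : G) {u v : X} (huv : u ≠ v) :
    c • M.pair E u v = M.pair E (c • u) (c • v) := by
  have hcl : c ∈ Subgroup.closure (insert M.τ (Set.range M.gen)) := htop ▸ Subgroup.mem_top c
  induction hcl using Subgroup.closure_induction generalizing u v with
  | mem c hc =>
    obtain rfl | ⟨i, rfl⟩ := hc
    · rw [hτ, hτ, (M.isCompatible_pair E).twist huv]
    · rw [(M.isCompatible_pair E).gen huv (hgen i u) (hgen i v)]
  | one => simp only [one_smul]
  | mul c d _ _ hc hd =>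
    rw [mul_smul, hd huv, hc ((MulAction.injective d).ne huv), mul_smul, mul_smul]
  | inv c _ hc =>
    rw [inv_smul_eq_iff, hc ((MulAction.injective c⁻¹).ne huv), smul_inv_smul, smul_inv_smul]

theorem smul_eq_of_smul_pair_eq (hτ : ∀ x, M.τ • x = M.twist x)
    (hgen : ∀ i x y, (i, x, y) ∈ E → M.gen i • x = y) {c : G} {u v u' v' : X}
    (h : c • M.pair E u v = M.pair E u' v') : c • u = u' ∧ c • v = v' := by
  have hcompat : M.IsCompatible E fun u v => (u, v) :=
    { twist := fun u v _ => by rw [Prod.smul_mk, hτ, hτ]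
      gen := fun i u v u' v' _ hu hv => by rw [Prod.smul_mk, hgen i u u' hu, hgen i v v' hv] }
  obtain ⟨Φ, hΦ⟩ := hcompat.exists_hom
  simpa only [map_smul, hΦ, Prod.smul_mk, Prod.mk.injEq] using congrArg Φ h

theorem IsRigidPartialAction.sharplyTwoTransitive (hE : M.IsRigidPartialAction E)
    (hτ : ∀ x, M.τ • x = M.twist x) (hgen : ∀ i x, (i, x, M.gen i • x) ∈ E)
    (htop : Subgroup.closure (insert M.τ (Set.range M.gen)) = ⊤) {a : X}
    (ha : ∀ x y, x ≠ y → M.IsLinked E a x y) : SharplyTwoTransitive G X := by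
  have smul_eq {c : G} {u v u' v' : X} (h : c • M.pair E u v = M.pair E u' v') :
      c • u = u' ∧ c • v = v' :=
    smul_eq_of_smul_pair_eq hτ (fun i x _ h => (hE.biUnique i).2 (hgen i x) h) h
  have twist_pair (x : X) : ∃ c : G, c • x = a ∧ c • M.twist x = M.twist a := by
    obtain ⟨c, hc⟩ | ⟨h, -⟩ := ha x (M.twist x) (M.twist_ne x).symm
    · exact ⟨c, smul_eq hc⟩
    · exact absurd rfl h
  refine .of_exists_smul_eq (a := a) (b := M.twist a) (fun c u v huv hu hv => ?_) fun x y hxy => ?_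
  · refine hE.isRigid.eq_one huv ?_
    rw [smul_pair hτ hgen htop c huv, hu, hv]
  · obtain ⟨c, hc⟩ | ⟨-, c, hc⟩ := ha x y hxy
    · exact ⟨c, smul_eq hc⟩
    · -- The element flipping `x` and `y` is a conjugate of `τ`, which reduces the pair `(x, y)` to
      -- one of the form `(x', twist x')`.
      obtain ⟨k, rfl⟩ := isConj_iff.1 (hE.isRigid.isConj hxy hc)
      obtain ⟨d, hd, hd'⟩ := twist_pair (k⁻¹ • x)
      refine ⟨d * k⁻¹, by rw [mul_smul, hd], ?_⟩
      rw [← hd', ← hτ, ← (smul_eq hc).1]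
      simp only [mul_smul, inv_smul_smul]

end Action

end TwistedGenerators

open scoped commutatorElement in
/-- The relators of `TwistGroup C`. The generator `none` is the involution `τ`, and the generator
`some i` is `gen i`. -/
def twistRelators {ι : Type*} (C : Set ι) : Set (FreeGroup (Option ι)) :=
  insert (FreeGroup.of none * FreeGroup.of none)
    {r | ∃ i ∈ C, ⁅FreeGroup.of (some i), FreeGroup.of none⁆ = r}

/-- The group generated by an involution `τ` and elements `gen i`, of which those with `i ∈ C`
commute with `τ`, and subject to no other relations. -/
abbrev TwistGroup {ι : Type*} (C : Set ι) : Type _ :=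
  PresentedGroup (twistRelators C)

namespace TwistGroup

variable {ι : Type*} (C : Set ι)

/-- The involution among the generators of `TwistGroup C`. -/
def τ : TwistGroup C := PresentedGroup.of none

variable {C} in
/-- The generator of `TwistGroup C` indexed by `i`. -/
def gen (i : ι) : TwistGroup C := PresentedGroup.of (some i)

theorem τ_mul_τ : τ C * τ C = 1 :=
  PresentedGroup.one_of_mem (rels := twistRelators C) (Or.inl rfl)

variable {C} in
theorem commute_gen_τ {i : ι} (hi : i ∈ C) : Commute (gen i) (τ C) :=
  commutatorElement_eq_one_iff_commute.1 <|
    PresentedGroup.one_of_mem (rels := twistRelators C) (Or.inr ⟨i, hi, rfl⟩)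

theorem closure_τ_gen : Subgroup.closure (insert (τ C) (Set.range (gen (C := C)))) = ⊤ := by
  rw [← PresentedGroup.closure_range_of, Option.range_eq]
  rfl

variable {C} in
theorem exists_hom {H : Type*} [Group H] {t : H} {g : ι → H} (ht : t * t = 1)
    (hg : ∀ i ∈ C, Commute (g i) t) :
    ∃ φ : TwistGroup C →* H, φ (τ C) = t ∧ ∀ i, φ (gen i) = g i := by
  have h : ∀ r ∈ twistRelators C, FreeGroup.lift (fun o : Option ι => o.elim t g) r = 1 := by
    rintro _ (rfl | ⟨i, hi, rfl⟩)
    · simpa using ht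
    · simpa [map_commutatorElement, commutatorElement_eq_one_iff_commute] using hg i hi
  exact ⟨PresentedGroup.toGroup h, PresentedGroup.toGroup.of h,
    fun _ => PresentedGroup.toGroup.of h⟩

variable {C} in
theorem not_commute_τ_conj {i : ι} (hi : i ∉ C) : ¬ Commute (τ C) (gen i * τ C * (gen i)⁻¹) := by
  classical
  obtain ⟨φ, hτ, hgen⟩ := exists_hom (C := C) (t := Equiv.swap (0 : Fin 3) 1)
    (g := fun j => if j ∈ C then 1 else Equiv.swap 1 2) (Equiv.swap_mul_self 0 1)
    (fun j hj => by rw [if_pos hj]; exact .one_left _)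
  intro h
  have := h.map φ
  rw [map_mul, map_mul, map_inv, hτ, hgen, if_neg hi] at this
  exact absurd this.eq (by decide)

variable {X : Type*}

variable {C} in
theorem exists_sharplyTwoTransitive [Countable ι] (hC : C.Infinite) (hC' : Cᶜ.Infinite)
    [Countable X] [Infinite X] {s : X → X} (hs : Function.Involutive s) (hs' : ∀ x, s x ≠ x) :
    ∃ _ : MulAction (TwistGroup C) X,
      (∀ x : X, τ C • x = s x) ∧ SharplyTwoTransitive (TwistGroup C) X := by
  let M : TwistedGenerators ι X (TwistGroup C) :=
    { τ := τ C
      gen := gen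
      central := C
      twist := s
      τ_mul_τ := τ_mul_τ C
      commute := fun _ => commute_gen_τ
      twist_twist := hs
      twist_ne := hs' }
  obtain ⟨a⟩ := (inferInstance : Nonempty X)
  obtain ⟨U, hU, htotal, hlinked⟩ := M.exists_isRigidPartialAction_biTotal hC hC' a
  choose f hf using fun i => exists_equiv_of_biUnique_of_biTotal (hU.biUnique i) (htotal i)
  obtain ⟨φ, hτ, hgen⟩ := exists_hom (C := C) (t := hs.toPerm) (g := f)
    (Equiv.ext hs) fun i hi => Equiv.ext fun x =>
      (hU.biUnique i).2 (hf i (s x)) (hU.twist_mem hi (hf i x))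
  let _ : MulAction (TwistGroup C) X := .compHom X φ
  have hτ' (x : X) : τ C • x = s x := congrArg (· x) hτ
  have hgen' (i : ι) (x : X) : (i, x, gen (C := C) i • x) ∈ U := by
    convert hf i x
    exact congrArg (· x) (hgen i)
  exact ⟨inferInstance, hτ', hU.sharplyTwoTransitive hτ' hgen' (closure_τ_gen C) hlinked⟩

end TwistGroup

theorem exists_sharply_two_transitive_char_two_no_abelian_normal :
    Nonempty SharplyTwoTransitiveWitness := by
  let C := ULift.down ⁻¹' Set.Ici (0 : ℤ)
  have hC : C.Infinite := (Set.Ici_infinite 0).preimage (by simp [ULift.down_surjective.range_eq])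
  have hC' : Cᶜ.Infinite :=
    (Set.compl_Ici (a := (0 : ℤ)) ▸ Set.Iio_infinite 0).preimage
      (by simp [ULift.down_surjective.range_eq])
  let s (x : ULift ℤ) : ULift ℤ := ⟨-1 - x.down⟩
  have hs : Function.Involutive s := fun x => ULift.ext _ _ (sub_sub_cancel _ _)
  have hs' (x) : s x ≠ x := fun h => by
    have : -1 - x.down = x.down := congrArg ULift.down h
    omega
  obtain ⟨_, hτ, hsharp⟩ := TwistGroup.exists_sharplyTwoTransitive hC hC' hs hs'
  have hfree (x : ULift ℤ) : TwistGroup.τ C • x ≠ x := hτ x ▸ hs' x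
  have horder : orderOf (TwistGroup.τ C) = 2 :=
    orderOf_eq_prime ((pow_two _).trans (TwistGroup.τ_mul_τ C)) fun h =>
      hfree 0 (by rw [h, one_smul])
  obtain ⟨i, hi⟩ := hC'.nonempty
  exact ⟨{ H := TwistGroup C
           Z := ULift ℤ
           infinite := inferInstance
           sharply2transitive := hsharp
           involutions_fixed_point_free := fun _ => hsharp.smul_ne_of_orderOf_eq_two horder hfree
           no_abelian_normal := fun N _ hN => hsharp.eq_bot_of_abelian_normal horder hfree
             (TwistGroup.not_commute_τ_conj hi)
             fun a ha b hb => congrArg Subtype.val (hN ⟨a, ha⟩ ⟨b, hb⟩) }⟩
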